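/- arXiv:1801.10298 — 2 statements merged into one kernel-verified Lean document; each statement's English description precedes it below -/
import Mathlib

section
/- There exists a Lie algebra homomorphism π from the Lie algebra 𝔬_{p+q}(ℂ) := { X ∈ M_{p+q}(ℂ) : Xᵀ·I_{p,q} + I_{p,q}·X = 0 } (with the commutator bracket, where I_{p,q} = diag(1_p,−1_q)) to the ℂ-linear endomorphisms of R such that, writing E_{a,b} for the matrix units: π(E_{i,j} − E_{j,i}) = −x_j∂_{x_i} + x_i∂_{x_j} for all 1 ≤ i,j ≤ p; π(E_{p+i,p+j} − E_{p+j,p+i}) = −y_j∂_{y_i} + y_i∂_{y_j} for all 1 ≤ i,j ≤ q; and π(E_{i,p+j} + E_{p+j,i}) = i·(x_i y_j + ∂_{x_i}∂_{y_j}) (i the imaginary unit) for all 1 ≤ i ≤ p, 1 ≤ j ≤ q. -/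
noncomputable section

/-- The polynomial ring `ℂ[x₁,…,x_p, y₁,…,y_q]`. -/
abbrev Rpq (p q : ℕ) := MvPolynomial (Fin p ⊕ Fin q) ℂ

/-- Multiplication by `x_i`. -/
def xop (p q : ℕ) (i : Fin p) : Module.End ℂ (Rpq p q) :=
  LinearMap.mulLeft ℂ (MvPolynomial.X (Sum.inl i))

/-- Multiplication by `y_j`. -/
def yop (p q : ℕ) (j : Fin q) : Module.End ℂ (Rpq p q) :=
  LinearMap.mulLeft ℂ (MvPolynomial.X (Sum.inr j))

/-- The partial derivative `∂_{x_i}`. -/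
def dx (p q : ℕ) (i : Fin p) : Module.End ℂ (Rpq p q) :=
  (MvPolynomial.pderiv (Sum.inl i)).toLinearMap

/-- The partial derivative `∂_{y_j}`. -/
def dy (p q : ℕ) (j : Fin q) : Module.End ℂ (Rpq p q) :=
  (MvPolynomial.pderiv (Sum.inr j)).toLinearMap

/-- The Euler operator `E_x = Σ_i x_i ∂_{x_i}`. -/
def Eop_x (p q : ℕ) : Module.End ℂ (Rpq p q) := ∑ i : Fin p, xop p q i * dx p q i

/-- The Euler operator `E_y = Σ_j y_j ∂_{y_j}`. -/
def Eop_y (p q : ℕ) : Module.End ℂ (Rpq p q) := ∑ j : Fin q, yop p q j * dy p q j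

/-- Multiplication by `r_x² = Σ_i x_i²`. -/
def rx2 (p q : ℕ) : Module.End ℂ (Rpq p q) :=
  LinearMap.mulLeft ℂ (∑ i : Fin p, MvPolynomial.X (Sum.inl i) ^ 2)

/-- Multiplication by `r_y² = Σ_j y_j²`. -/
def ry2 (p q : ℕ) : Module.End ℂ (Rpq p q) :=
  LinearMap.mulLeft ℂ (∑ j : Fin q, MvPolynomial.X (Sum.inr j) ^ 2)

/-- The Laplacian `Δ_x = Σ_i ∂_{x_i}²`. -/
def Δx (p q : ℕ) : Module.End ℂ (Rpq p q) := ∑ i : Fin p, dx p q i * dx p q i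

/-- The Laplacian `Δ_y = Σ_j ∂_{y_j}²`. -/
def Δy (p q : ℕ) : Module.End ℂ (Rpq p q) := ∑ j : Fin q, dy p q j * dy p q j

/-- `H = −E_x − (p/2)·id + E_y + (q/2)·id`. -/
def Hop (p q : ℕ) : Module.End ℂ (Rpq p q) :=
  -Eop_x p q - ((p : ℂ) / 2) • 1 + Eop_y p q + ((q : ℂ) / 2) • 1

/-- `X⁺ = −(1/2)(Δ_x + r_y²)`. -/
def Xplus (p q : ℕ) : Module.End ℂ (Rpq p q) :=
  -((1 : ℂ) / 2) • (Δx p q + ry2 p q)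

/-- `X⁻ = (1/2)(r_x² + Δ_y)`. -/
def Xminus (p q : ℕ) : Module.End ℂ (Rpq p q) :=
  ((1 : ℂ) / 2) • (rx2 p q + Δy p q)

/-- The matrix `I_{p,q} = diag(1_p, −1_q)` over `ℂ`. -/
def IpqC (p q : ℕ) : Matrix (Fin (p + q)) (Fin (p + q)) ℂ :=
  Matrix.diagonal (fun i => if (i : ℕ) < p then 1 else -1)

end

noncomputable section

/-- The oscillator map `A ↦ ∑ A_{ab} U_a V_b`. -/
def oscMap {n : ℕ} {S : Type*} [Ring S] [Algebra ℂ S] (U V : Fin n → S) :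
    Matrix (Fin n) (Fin n) ℂ →ₗ[ℂ] S where
  toFun A := ∑ a, ∑ b, A a b • (U a * V b)
  map_add' A B := by
    simp [add_smul, Finset.sum_add_distrib]
  map_smul' c A := by
    simp [mul_smul, Finset.smul_sum]

theorem oscMap_single {n : ℕ} {S : Type*} [Ring S] [Algebra ℂ S] (U V : Fin n → S)
    (a b : Fin n) (c : ℂ) : oscMap U V (Matrix.single a b c) = c • (U a * V b) := by
  simp only [oscMap, LinearMap.coe_mk, AddHom.coe_mk]
  rw [Finset.sum_eq_single a, Finset.sum_eq_single b]
  · simp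
  · intro b' _ hb
    simp [Matrix.single_apply, hb.symm]
  · simp
  · intro a' _ ha
    simp [Matrix.single_apply, ha.symm]
  · simp

theorem osc_comm {n : ℕ} {S : Type*} [Ring S] (U V : Fin n → S)
    (hU : ∀ a b, U a * U b = U b * U a) (hV : ∀ a b, V a * V b = V b * V a)
    (hUV : ∀ a b, V a * U b = U b * V a + if a = b then 1 else 0) (a b c d : Fin n) :
    U a * V b * (U c * V d) - U c * V d * (U a * V b) =
      (if b = c then U a * V d else 0) - (if d = a then U c * V b else 0) := by
  have h1 : U a * V b * (U c * V d) =
      U a * U c * (V b * V d) + if b = c then U a * V d else 0 := by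
    rw [mul_assoc, ← mul_assoc (V b), hUV b c]
    split_ifs <;> noncomm_ring
  have h2 : U c * V d * (U a * V b) =
      U a * U c * (V b * V d) + if d = a then U c * V b else 0 := by
    rw [mul_assoc, ← mul_assoc (V d), hUV d a, hU a c, hV b d]
    split_ifs <;> noncomm_ring
  rw [h1, h2]
  abel

theorem oscMap_comm {n : ℕ} {S : Type*} [Ring S] [Algebra ℂ S] (U V : Fin n → S)
    (hU : ∀ a b, U a * U b = U b * U a) (hV : ∀ a b, V a * V b = V b * V a)
    (hUV : ∀ a b, V a * U b = U b * V a + if a = b then 1 else 0)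
    (A B : Matrix (Fin n) (Fin n) ℂ) :
    oscMap U V (A * B - B * A) = oscMap U V A * oscMap U V B - oscMap U V B * oscMap U V A := by
  induction A using Matrix.induction_on' with
  | h_zero => simp
  | h_add A A' hA hA' =>
    have : (A + A') * B - B * (A + A') = (A * B - B * A) + (A' * B - B * A') := by noncomm_ring
    rw [this, map_add, hA, hA', map_add]
    noncomm_ring
  | h_std_basis a b x =>
    induction B using Matrix.induction_on' with
    | h_zero => simp
    | h_add A A' hA hA' =>
      have : Matrix.single a b x * (A + A') - (A + A') * Matrix.single a b x
        = (Matrix.single a b x * A - A * Matrix.single a b x)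
          + (Matrix.single a b x * A' - A' * Matrix.single a b x) := by noncomm_ring
      rw [this, map_add, hA, hA', map_add]
      noncomm_ring
    | h_std_basis c d y =>
      have key := osc_comm U V hU hV hUV a b c d
      have e : oscMap U V (Matrix.single a b x * Matrix.single c d y
            - Matrix.single c d y * Matrix.single a b x) =
          (x * y) • ((if b = c then U a * V d else 0) - (if d = a then U c * V b else 0)) := by
        rw [map_sub, smul_sub]
        congr 1
        · by_cases h : b = c
          · subst h
            simp [oscMap_single]
          · simp [h]
        · by_cases h : d = a
          · subst h
            simp [oscMap_single, mul_comm]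
          · simp [h]
      rw [e, ← key, oscMap_single, oscMap_single, smul_mul_smul_comm, smul_mul_smul_comm,
        mul_comm y x, smul_sub]

section ops
variable (p q : ℕ)

/-- Creation-type generators. -/
def Uop : Fin (p + q) → Module.End ℂ (Rpq p q) :=
  Fin.addCases (fun i => xop p q i) (fun j => Complex.I • dy p q j)

/-- Annihilation-type generators. -/
def Vop : Fin (p + q) → Module.End ℂ (Rpq p q) :=
  Fin.addCases (fun i => dx p q i) (fun j => Complex.I • yop p q j)

theorem mul_mul_comm' (a b : Fin p ⊕ Fin q) :
    (LinearMap.mulLeft ℂ (MvPolynomial.X a) : Module.End ℂ (Rpq p q)) *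
      LinearMap.mulLeft ℂ (MvPolynomial.X b) =
    LinearMap.mulLeft ℂ (MvPolynomial.X b) * LinearMap.mulLeft ℂ (MvPolynomial.X a) := by
  refine LinearMap.ext fun f => ?_
  simp only [Module.End.mul_apply, LinearMap.mulLeft_apply]
  ring

theorem d_d_comm (a b : Fin p ⊕ Fin q) :
    ((MvPolynomial.pderiv a).toLinearMap : Module.End ℂ (Rpq p q)) *
      (MvPolynomial.pderiv b).toLinearMap =
    (MvPolynomial.pderiv b).toLinearMap * (MvPolynomial.pderiv a).toLinearMap := by
  have h : ⁅(MvPolynomial.pderiv a : Derivation ℂ (Rpq p q) (Rpq p q)),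
      (MvPolynomial.pderiv b : Derivation ℂ (Rpq p q) (Rpq p q))⁆ = 0 := by
    apply MvPolynomial.derivation_ext
    intro i
    rw [Derivation.commutator_apply]
    simp [MvPolynomial.pderiv_X, Pi.single_apply, apply_ite]
  refine LinearMap.ext fun f => ?_
  have := congrArg (fun D : Derivation ℂ (Rpq p q) (Rpq p q) => D f) h
  simp only [Derivation.commutator_apply, Derivation.zero_apply] at this
  exact sub_eq_zero.mp this

theorem d_mul_comm (a b : Fin p ⊕ Fin q) :
    ((MvPolynomial.pderiv a).toLinearMap : Module.End ℂ (Rpq p q)) *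
      LinearMap.mulLeft ℂ (MvPolynomial.X b) =
    LinearMap.mulLeft ℂ (MvPolynomial.X b) * (MvPolynomial.pderiv a).toLinearMap +
      if a = b then 1 else 0 := by
  refine LinearMap.ext fun f => ?_
  by_cases h : a = b
  · subst h
    simp [Derivation.leibniz]
  · simp [Derivation.leibniz, MvPolynomial.pderiv_X, h, Pi.single_apply, Ne.symm h]

theorem xx (i j : Fin p) : xop p q i * xop p q j = xop p q j * xop p q i := mul_mul_comm' p q _ _
theorem yy (i j : Fin q) : yop p q i * yop p q j = yop p q j * yop p q i := mul_mul_comm' p q _ _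
theorem dxdx (i j : Fin p) : dx p q i * dx p q j = dx p q j * dx p q i := d_d_comm p q _ _
theorem dydy (i j : Fin q) : dy p q i * dy p q j = dy p q j * dy p q i := d_d_comm p q _ _
theorem dydx (i : Fin q) (j : Fin p) : dy p q i * dx p q j = dx p q j * dy p q i :=
  d_d_comm p q _ _
theorem yx (i : Fin q) (j : Fin p) : yop p q i * xop p q j = xop p q j * yop p q i :=
  mul_mul_comm' p q _ _
theorem dxx (i j : Fin p) : dx p q i * xop p q j = xop p q j * dx p q i +
    if i = j then 1 else 0 := by
  simpa [dx, xop] using d_mul_comm p q (Sum.inl i) (Sum.inl j)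
theorem dyy (i j : Fin q) : dy p q i * yop p q j = yop p q j * dy p q i +
    if i = j then 1 else 0 := by
  simpa [dy, yop] using d_mul_comm p q (Sum.inr i) (Sum.inr j)
theorem dyx (i : Fin q) (j : Fin p) : dy p q i * xop p q j = xop p q j * dy p q i := by
  simpa [dy, xop] using d_mul_comm p q (Sum.inr i) (Sum.inl j)
theorem dxy (i : Fin p) (j : Fin q) : dx p q i * yop p q j = yop p q j * dx p q i := by
  simpa [dx, yop] using d_mul_comm p q (Sum.inl i) (Sum.inr j)

theorem Uop_comm (a b : Fin (p + q)) : Uop p q a * Uop p q b = Uop p q b * Uop p q a := by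
  refine Fin.addCases (fun i => ?_) (fun i => ?_) a <;>
  refine Fin.addCases (fun j => ?_) (fun j => ?_) b <;>
  simp only [Uop, Fin.addCases_left, Fin.addCases_right, mul_smul_comm, smul_mul_assoc]
  · exact xx p q i j
  · rw [dyx]
  · rw [dyx]
  · rw [dydy]

theorem Vop_comm (a b : Fin (p + q)) : Vop p q a * Vop p q b = Vop p q b * Vop p q a := by
  refine Fin.addCases (fun i => ?_) (fun i => ?_) a <;>
  refine Fin.addCases (fun j => ?_) (fun j => ?_) b <;>
  simp only [Vop, Fin.addCases_left, Fin.addCases_right, mul_smul_comm, smul_mul_assoc]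
  · exact dxdx p q i j
  · rw [dxy]
  · rw [dxy]
  · rw [yy]

theorem castAdd_ne_natAdd' (i : Fin p) (j : Fin q) : Fin.castAdd q i ≠ Fin.natAdd p j := by
  intro h
  have := congrArg Fin.val h
  simp at this
  omega

theorem VU_comm (a b : Fin (p + q)) :
    Vop p q a * Uop p q b = Uop p q b * Vop p q a + if a = b then 1 else 0 := by
  refine Fin.addCases (fun i => ?_) (fun i => ?_) a <;>
  refine Fin.addCases (fun j => ?_) (fun j => ?_) b <;>
  simp only [Uop, Vop, Fin.addCases_left, Fin.addCases_right, mul_smul_comm, smul_mul_assoc]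
  · rw [dxx]
    simp
  · rw [dydx, if_neg (castAdd_ne_natAdd' p q i j), add_zero]
  · rw [yx, if_neg (castAdd_ne_natAdd' p q j i).symm, add_zero]
  · rw [dyy]
    simp only [smul_smul, Complex.I_mul_I, Fin.natAdd_inj]
    by_cases h : i = j
    · subst h
      simp
    · simp [h, Ne.symm h]

end ops

end

theorem stmt_2 (p q : ℕ) (hp : 1 ≤ p) (hq : 1 ≤ q) :
    ∃ Φ : Matrix (Fin (p + q)) (Fin (p + q)) ℂ →ₗ[ℂ] Module.End ℂ (Rpq p q),
      (∀ A B : Matrix (Fin (p + q)) (Fin (p + q)) ℂ,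
        A.transpose * IpqC p q + IpqC p q * A = 0 → B.transpose * IpqC p q + IpqC p q * B = 0 →
        Φ (A * B - B * A) = Φ A * Φ B - Φ B * Φ A) ∧
      (∀ i j : Fin p,
        Φ (Matrix.single (Fin.castAdd q i) (Fin.castAdd q j) 1 -
            Matrix.single (Fin.castAdd q j) (Fin.castAdd q i) 1) =
          -(xop p q j * dx p q i) + xop p q i * dx p q j) ∧
      (∀ i j : Fin q,
        Φ (Matrix.single (Fin.natAdd p i) (Fin.natAdd p j) 1 -
            Matrix.single (Fin.natAdd p j) (Fin.natAdd p i) 1) =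
          -(yop p q j * dy p q i) + yop p q i * dy p q j) ∧
      (∀ (i : Fin p) (j : Fin q),
        Φ (Matrix.single (Fin.castAdd q i) (Fin.natAdd p j) 1 +
            Matrix.single (Fin.natAdd p j) (Fin.castAdd q i) 1) =
          Complex.I • (xop p q i * yop p q j + dx p q i * dy p q j)) := by
  refine ⟨oscMap (Uop p q) (Vop p q), fun A B _ _ =>
    oscMap_comm _ _ (Uop_comm p q) (Vop_comm p q) (VU_comm p q) A B, ?_, ?_, ?_⟩
  · intro i j
    simp only [map_sub, oscMap_single, Uop, Vop, Fin.addCases_left, one_smul]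
    abel
  · intro i j
    simp only [map_sub, oscMap_single, Uop, Vop, Fin.addCases_right, one_smul, mul_smul_comm,
      smul_mul_assoc, smul_smul, Complex.I_mul_I, dyy, neg_smul, eq_comm (a := j) (b := i)]
    abel
  · intro i j
    simp only [map_add, oscMap_single, Uop, Vop, Fin.addCases_right, Fin.addCases_left, one_smul,
      mul_smul_comm, smul_mul_assoc, smul_add, dydx]
end

section
/- There exists a Lie algebra homomorphism π♯ from the Lie algebra 𝔬_{p+q}(ℂ) := { X ∈ M_{p+q}(ℂ) : Xᵀ·I_{p,q} + I_{p,q}·X = 0 } (with the commutator bracket, where I_{p,q} = diag(1_p,−1_q)) to the ℂ-linear endomorphisms of R such that, writing E_{a,b} for the matrix units: π♯(E_{i,j} − E_{j,i}) = −x_j∂_{x_i} + x_i∂_{x_j} for all 1 ≤ i,j ≤ p; π♯(E_{p+i,p+j} − E_{p+j,p+i}) = −y_j∂_{y_i} + y_i∂_{y_j} for all 1 ≤ i,j ≤ q; and π♯(E_{i,p+j} + E_{p+j,i}) = −(x_i∂_{y_j} + y_j∂_{x_i}) for all 1 ≤ i ≤ p, 1 ≤ j ≤ q. -/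
noncomputable section

/-- The sign of a variable: `1` on the `x`'s, `-1` on the `y`'s. -/
def sgnv (p q : ℕ) : Fin p ⊕ Fin q → ℂ := Sum.elim (fun _ => 1) (fun _ => -1)

/-- Vector field attached to a matrix. -/
def vf (p q : ℕ) (A : Matrix (Fin (p + q)) (Fin (p + q)) ℂ) :
    Derivation ℂ (Rpq p q) (Rpq p q) :=
  MvPolynomial.mkDerivation ℂ (fun b => ∑ a : Fin p ⊕ Fin q,
    (sgnv p q a * sgnv p q b * A (finSumFinEquiv a) (finSumFinEquiv b)) • MvPolynomial.X a)

lemma vf_X (p q : ℕ) (A : Matrix (Fin (p + q)) (Fin (p + q)) ℂ) (b : Fin p ⊕ Fin q) :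
    vf p q A (MvPolynomial.X b) = ∑ a : Fin p ⊕ Fin q,
    (sgnv p q a * sgnv p q b * A (finSumFinEquiv a) (finSumFinEquiv b)) •
      (MvPolynomial.X a : Rpq p q) := by
  simp only [vf, MvPolynomial.mkDerivation_X]

lemma sgnv_sq (p q : ℕ) (a : Fin p ⊕ Fin q) : sgnv p q a * sgnv p q a = 1 := by
  cases a <;> simp [sgnv]

/-- The linear map. -/
def vfl (p q : ℕ) : Matrix (Fin (p + q)) (Fin (p + q)) ℂ →ₗ[ℂ] Module.End ℂ (Rpq p q) where
  toFun A := (vf p q A).toLinearMap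
  map_add' A B := by
    have : vf p q (A + B) = vf p q A + vf p q B := by
      apply MvPolynomial.derivation_ext
      intro b
      simp only [Derivation.add_apply, vf_X, ← Finset.sum_add_distrib, ← add_smul,
        Matrix.add_apply, mul_add]
    rw [this]; rfl
  map_smul' c A := by
    have : vf p q (c • A) = c • vf p q A := by
      apply MvPolynomial.derivation_ext
      intro b
      simp only [Derivation.smul_apply, vf_X, Finset.smul_sum, smul_smul,
        Matrix.smul_apply, smul_eq_mul]
      refine Finset.sum_congr rfl fun a _ => ?_
      congr 1; ring
    rw [this]; rfl

lemma vf_vf_X (p q : ℕ) (A B : Matrix (Fin (p + q)) (Fin (p + q)) ℂ) (b : Fin p ⊕ Fin q) :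
    vf p q A (vf p q B (MvPolynomial.X b)) = vf p q (A * B) (MvPolynomial.X b) := by
  simp only [vf_X, map_sum, Derivation.map_smul, Finset.smul_sum, smul_smul]
  rw [Finset.sum_comm]
  refine Finset.sum_congr rfl fun c _ => ?_
  rw [← Finset.sum_smul, Matrix.mul_apply, Finset.mul_sum,
    ← Equiv.sum_comp finSumFinEquiv]
  congr 1
  refine Finset.sum_congr rfl fun a _ => ?_
  linear_combination (sgnv p q b * B (finSumFinEquiv a) (finSumFinEquiv b) * sgnv p q c *
    A (finSumFinEquiv c) (finSumFinEquiv a)) * sgnv_sq p q a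

lemma vfl_comm (p q : ℕ) (A B : Matrix (Fin (p + q)) (Fin (p + q)) ℂ) :
    vfl p q (A * B - B * A) = vfl p q A * vfl p q B - vfl p q B * vfl p q A := by
  have h : vf p q (A * B - B * A) = ⁅vf p q A, vf p q B⁆ := by
    apply MvPolynomial.derivation_ext
    intro b
    rw [Derivation.commutator_apply, vf_vf_X, vf_vf_X]
    exact congrArg (fun f : Module.End ℂ (Rpq p q) => f (MvPolynomial.X b))
      (map_sub (vfl p q) (A * B) (B * A))
  refine LinearMap.ext fun f => ?_
  exact congrArg (fun D => D f) h

lemma vfl_single (p q : ℕ) (a b : Fin p ⊕ Fin q) :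
    vfl p q (Matrix.single (finSumFinEquiv a) (finSumFinEquiv b) 1) =
      (sgnv p q a * sgnv p q b) • (LinearMap.mulLeft ℂ (MvPolynomial.X a) *
        (MvPolynomial.pderiv b).toLinearMap : Module.End ℂ (Rpq p q)) := by
  have h : vf p q (Matrix.single (finSumFinEquiv a) (finSumFinEquiv b) 1) =
      (sgnv p q a * sgnv p q b) • ((MvPolynomial.X a : Rpq p q) • MvPolynomial.pderiv b) := by
    apply MvPolynomial.derivation_ext
    intro c
    rw [vf_X, Derivation.smul_apply, Derivation.smul_apply, MvPolynomial.pderiv_X,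
      Finset.sum_eq_single a]
    · by_cases hc : b = c
      · subst hc; simp
      · simp [Matrix.single_apply, hc, Pi.single_apply, Ne.symm hc]
    · intro d _ hd
      simp [Matrix.single_apply, Ne.symm hd]
    · simp
  refine LinearMap.ext fun f => ?_
  exact congrArg (fun D => D f) h

end

theorem stmt_3 (p q : ℕ) (hp : 1 ≤ p) (hq : 1 ≤ q) :
    ∃ Φ : Matrix (Fin (p + q)) (Fin (p + q)) ℂ →ₗ[ℂ] Module.End ℂ (Rpq p q),
      (∀ A B : Matrix (Fin (p + q)) (Fin (p + q)) ℂ,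
        A.transpose * IpqC p q + IpqC p q * A = 0 →
        B.transpose * IpqC p q + IpqC p q * B = 0 →
        Φ (A * B - B * A) = Φ A * Φ B - Φ B * Φ A) ∧
      (∀ i j : Fin p,
        Φ (Matrix.single (Fin.castAdd q i) (Fin.castAdd q j) 1 -
            Matrix.single (Fin.castAdd q j) (Fin.castAdd q i) 1) =
          -(xop p q j * dx p q i) + xop p q i * dx p q j) ∧
      (∀ i j : Fin q,
        Φ (Matrix.single (Fin.natAdd p i) (Fin.natAdd p j) 1 -
            Matrix.single (Fin.natAdd p j) (Fin.natAdd p i) 1) =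
          -(yop p q j * dy p q i) + yop p q i * dy p q j) ∧
      (∀ (i : Fin p) (j : Fin q),
        Φ (Matrix.single (Fin.castAdd q i) (Fin.natAdd p j) 1 +
            Matrix.single (Fin.natAdd p j) (Fin.castAdd q i) 1) =
          -(xop p q i * dy p q j + yop p q j * dx p q i)) := by
  refine ⟨vfl p q, fun A B _ _ => vfl_comm p q A B, ?_, ?_, ?_⟩
  · intro i j
    have h1 := vfl_single p q (Sum.inl i) (Sum.inl j)
    have h2 := vfl_single p q (Sum.inl j) (Sum.inl i)
    simp only [finSumFinEquiv_apply_left, sgnv, Sum.elim_inl, mul_one, one_smul] at h1 h2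
    rw [map_sub, h1, h2, sub_eq_neg_add]
    rfl
  · intro i j
    have h1 := vfl_single p q (Sum.inr i) (Sum.inr j)
    have h2 := vfl_single p q (Sum.inr j) (Sum.inr i)
    simp only [finSumFinEquiv_apply_right, sgnv, Sum.elim_inr, neg_mul_neg, mul_one,
      one_smul] at h1 h2
    rw [map_sub, h1, h2, sub_eq_neg_add]
    rfl
  · intro i j
    have h1 := vfl_single p q (Sum.inl i) (Sum.inr j)
    have h2 := vfl_single p q (Sum.inr j) (Sum.inl i)
    simp only [finSumFinEquiv_apply_right, finSumFinEquiv_apply_left, sgnv, Sum.elim_inr,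
      Sum.elim_inl, mul_one, one_mul] at h1 h2
    rw [map_add, h1, h2, ← smul_add]
    exact neg_one_smul ℂ (xop p q i * dy p q j + yop p q j * dx p q i)
end
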